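/- arXiv:1012.3851 — 2 statements merged into one kernel-verified Lean document; each statement's English description precedes it below -/
import Mathlib

section
/- Let Ω be a non-empty bounded open interval in ℝ, let ℙ be a Borel probability measure on Ω, and let (X_i)_{i∈ℕ} be i.i.d. Ω-valued random variables with law ℙ. Let 𝓕 be a non-empty set of non-negative bounded Borel-measurable real-valued functions on Ω that is compact with respect to the sup-norm metric and whose elements are uniformly bounded away from 0, i.e., inf_{f∈𝓕} inf_{x∈Ω} f(x) > 0. Then sup_{f∈𝓕} | n^{−1} ∑_{i=1}^n log f(X_i) − ∫_Ω log f dℙ | → 0 almost surely as n → ∞. -/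
open MeasureTheory

open ProbabilityTheory Filter Topology in
/-- Strong law of large numbers for an integrable function of an i.i.d. sequence. -/
lemma ae_tendsto_empirical_mean {S Ω₀ : Type*} [MeasurableSpace S] [MeasurableSpace Ω₀]
    {P : Measure S} {μ : Measure Ω₀} {X : ℕ → Ω₀ → S}
    (hX_meas : ∀ i, Measurable (X i)) (hX_law : ∀ i, Measure.map (X i) μ = P)
    (hX_indep : iIndepFun X μ) {g : S → ℝ} (hg : Measurable g) (hg_int : Integrable g P) :
    ∀ᵐ ω ∂μ, Tendsto (fun n : ℕ => (n : ℝ)⁻¹ * ∑ i ∈ Finset.range n, g (X i ω)) atTop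
      (𝓝 (∫ x, g x ∂P)) := by
  have hint : Integrable (g ∘ X 0) μ := by
    rw [← hX_law 0] at hg_int
    exact hg_int.comp_measurable (hX_meas 0)
  have hind : Pairwise (Function.onFun (fun f h => IndepFun f h μ) fun i => g ∘ X i) :=
    fun i j hij => (hX_indep.indepFun hij).comp hg hg
  have hid : ∀ i, IdentDistrib (g ∘ X i) (g ∘ X 0) μ μ := fun i =>
    IdentDistrib.comp ⟨(hX_meas i).aemeasurable, (hX_meas 0).aemeasurable,
      (hX_law i).trans (hX_law 0).symm⟩ hg
  have hmean : ∫ ω, (g ∘ X 0) ω ∂μ = ∫ x, g x ∂P := by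
    rw [← hX_law 0, integral_map (hX_meas 0).aemeasurable hg.aestronglyMeasurable]
    rfl
  filter_upwards [strong_law_ae_real (fun i => g ∘ X i) hint hind hid] with ω hω
  rw [hmean] at hω
  simpa only [Function.comp_apply, div_eq_inv_mul] using hω

/-- Empirical means of functions at uniform distance at most `δ` differ by at most `δ`. -/
lemma abs_empirical_mean_sub_le {S : Type*} {f g : S → ℝ} {δ : ℝ} (hδ : 0 ≤ δ)
    (h : ∀ x, |f x - g x| ≤ δ) (x : ℕ → S) (n : ℕ) :
    |(n : ℝ)⁻¹ * ∑ i ∈ Finset.range n, f (x i) - (n : ℝ)⁻¹ * ∑ i ∈ Finset.range n, g (x i)| ≤ δ := by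
  rw [← mul_sub, ← Finset.sum_sub_distrib, abs_mul, abs_of_nonneg (by positivity)]
  have hsum : |∑ i ∈ Finset.range n, (f (x i) - g (x i))| ≤ n * δ := by
    refine (Finset.abs_sum_le_sum_abs _ _).trans ?_
    simpa using Finset.sum_le_sum fun i (_ : i ∈ Finset.range n) => h (x i)
  rcases n.eq_zero_or_pos with rfl | hn
  · simpa using hδ
  · have hn' : (0 : ℝ) < n := by exact_mod_cast hn
    rwa [inv_mul_le_iff₀ hn']

open ProbabilityTheory Filter in
/-- Strong law of large numbers, uniformly over a class of integrable functions that is totally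
bounded for the sup-norm distance. -/
lemma ae_uniform_empirical_mean {S Ω₀ : Type*} [MeasurableSpace S] [MeasurableSpace Ω₀]
    {P : Measure S} [IsProbabilityMeasure P] {μ : Measure Ω₀} {X : ℕ → Ω₀ → S}
    (hX_meas : ∀ i, Measurable (X i)) (hX_law : ∀ i, Measure.map (X i) μ = P)
    (hX_indep : iIndepFun X μ) {G : Set (S → ℝ)} (hG_meas : ∀ g ∈ G, Measurable g)
    (hG_int : ∀ g ∈ G, Integrable g P)
    (hG_net : ∀ δ : ℝ, 0 < δ → ∃ T ⊆ G, T.Finite ∧ ∀ f ∈ G, ∃ g ∈ T, ∀ x, |f x - g x| ≤ δ) :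
    ∀ᵐ ω ∂μ, ∀ ε : ℝ, 0 < ε → ∃ N : ℕ, ∀ n ≥ N, ∀ f ∈ G,
      |(n : ℝ)⁻¹ * ∑ i ∈ Finset.range n, f (X i ω) - ∫ x, f x ∂P| ≤ ε := by
  choose T hTG hT_fin hT_net using fun k : ℕ => hG_net (1 / ((k : ℝ) + 1)) (by positivity)
  have hae := ae_all_iff.2 fun k => (ae_ball_iff (hT_fin k).countable).2 fun g hg =>
    ae_tendsto_empirical_mean hX_meas hX_law hX_indep (hG_meas g (hTG k hg))
      (hG_int g (hTG k hg))
  filter_upwards [hae] with ω hω ε hε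
  obtain ⟨k, hk⟩ := exists_nat_one_div_lt (show (0 : ℝ) < ε / 3 by positivity)
  have hev : ∀ᶠ n : ℕ in atTop, ∀ g ∈ T k,
      |(n : ℝ)⁻¹ * ∑ i ∈ Finset.range n, g (X i ω) - ∫ x, g x ∂P| < ε / 3 :=
    (eventually_all_finite (hT_fin k)).2 fun g hg =>
      (Metric.tendsto_nhds.1 (hω k g hg)) (ε / 3) (by positivity)
  obtain ⟨N, hN⟩ := eventually_atTop.1 hev
  refine ⟨N, fun n hn f hf => ?_⟩
  obtain ⟨g, hgT, hfg⟩ := hT_net k f hf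
  have hmean := abs_empirical_mean_sub_le (by positivity) hfg (fun i => X i ω) n
  have hlim := hN n hn g hgT
  have hint : |∫ x, g x ∂P - ∫ x, f x ∂P| ≤ 1 / ((k : ℝ) + 1) := by
    rw [← integral_sub (hG_int g (hTG k hgT)) (hG_int f hf)]
    simpa using norm_integral_le_of_norm_le_const (μ := P) (f := fun x => g x - f x)
      (.of_forall fun x => by simpa [abs_sub_comm] using hfg x)
  rw [abs_le] at hmean hint ⊢
  rw [abs_lt] at hlim
  constructor <;> linarith [hmean.1, hmean.2, hlim.1, hlim.2, hint.1, hint.2]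

/-- A class of functions compact for uniform convergence has finite sup-norm nets. -/
lemma exists_finite_uniform_net {S : Type*} {F : Set (S → ℝ)}
    (hF : IsCompact (UniformFun.ofFun '' F : Set (UniformFun S ℝ))) {δ : ℝ} (hδ : 0 < δ) :
    ∃ T ⊆ F, T.Finite ∧ ∀ f ∈ F, ∃ g ∈ T, ∀ x, |f x - g x| ≤ δ := by
  obtain ⟨t, htF, ht_fin, ht_net⟩ := totallyBounded_iff_subset.1 hF.totallyBounded _
    ((UniformFun.hasBasis_uniformity S ℝ).mem_of_mem (Metric.dist_mem_uniformity hδ))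
  obtain ⟨T, hTF, hT_fin, rfl⟩ := Set.exists_subset_image_finite_and.1 ⟨t, htF, ht_fin, rfl⟩
  refine ⟨T, hTF, hT_fin, fun f hf => ?_⟩
  obtain ⟨_, ⟨g, hg, rfl⟩, hfg⟩ := Set.mem_iUnion₂.1 (ht_net (Set.mem_image_of_mem _ hf))
  exact ⟨g, hg, fun x => (hfg x).le⟩

/-- The logarithm is `c⁻¹`-Lipschitz on `[c, ∞)`. -/
lemma Real.abs_log_sub_log_le {c u v : ℝ} (hc : 0 < c) (hu : c ≤ u) (hv : c ≤ v) :
    |Real.log u - Real.log v| ≤ |u - v| / c := by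
  have key : ∀ {s t : ℝ}, c ≤ s → c ≤ t → Real.log s - Real.log t ≤ |s - t| / c := by
    intro s t hs ht
    have hs' := hc.trans_le hs
    have ht' := hc.trans_le ht
    calc Real.log s - Real.log t = Real.log (s / t) := (Real.log_div hs'.ne' ht'.ne').symm
      _ ≤ s / t - 1 := Real.log_le_sub_one_of_pos (div_pos hs' ht')
      _ = (s - t) / t := by field_simp
      _ ≤ |s - t| / t := by gcongr; exact le_abs_self _
      _ ≤ |s - t| / c := by gcongr
  rw [abs_le]
  have h := key hv hu
  rw [abs_sub_comm] at h
  exact ⟨by linarith, key hu hv⟩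

/-- uniform strong law of large numbers for the log-likelihood.
Let `Ω = (a,b)` be a non-empty bounded open interval, `ℙ` a Borel probability measure on
`Ω`, and `(X_i)` i.i.d. `Ω`-valued random variables with law `ℙ`.  Let `F` be a non-empty
set of non-negative bounded Borel-measurable real-valued functions on `Ω`, compact for the
sup-norm metric (topology of uniform convergence) and uniformly bounded away from `0`.
Then `sup_{f∈F} |n⁻¹ ∑_{i=1}^n log f(X_i) − ∫ log f dℙ| → 0` almost surely. -/
theorem stmt6_uniform_slln
    (a b : ℝ) (hab : a < b)
    (P : Measure (Set.Ioo a b)) [IsProbabilityMeasure P]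
    {Ω₀ : Type*} [MeasurableSpace Ω₀] (ℙ : Measure Ω₀) [IsProbabilityMeasure ℙ]
    (X : ℕ → Ω₀ → Set.Ioo a b)
    (hX_meas : ∀ i, Measurable (X i))
    (hX_law : ∀ i, Measure.map (X i) ℙ = P)
    (hX_indep : ProbabilityTheory.iIndepFun X ℙ)
    (F : Set (Set.Ioo a b → ℝ)) (hFne : F.Nonempty)
    (hF_meas : ∀ f ∈ F, Measurable f)
    (hF_nonneg : ∀ f ∈ F, ∀ x, 0 ≤ f x)
    (hF_bdd : ∀ f ∈ F, ∃ M : ℝ, ∀ x, f x ≤ M)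
    (hF_cpt : IsCompact (UniformFun.ofFun '' F : Set (UniformFun (Set.Ioo a b) ℝ)))
    (hF_lb : ∃ c : ℝ, 0 < c ∧ ∀ f ∈ F, ∀ x, c ≤ f x) :
    ∀ᵐ ω ∂ℙ, ∀ ε : ℝ, 0 < ε → ∃ N : ℕ, ∀ n ≥ N, ∀ f ∈ F,
      |(n : ℝ)⁻¹ * ∑ i ∈ Finset.range n, Real.log (f (X i ω)) -
        ∫ x, Real.log (f x) ∂P| ≤ ε := by
  obtain ⟨c, hc, hcF⟩ := hF_lb
  have hlog := ae_uniform_empirical_mean (G := (fun f x => Real.log (f x)) '' F)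
    hX_meas hX_law hX_indep ?_ ?_ ?_
  · simpa only [Set.forall_mem_image] using hlog
  · rintro _ ⟨f, hf, rfl⟩
    exact (hF_meas f hf).log
  · rintro _ ⟨f, hf, rfl⟩
    obtain ⟨M, hM⟩ := hF_bdd f hf
    exact .of_mem_Icc (Real.log c) (Real.log M) (hF_meas f hf).log.aemeasurable
      (.of_forall fun x => ⟨Real.log_le_log hc (hcF f hf x),
        Real.log_le_log (hc.trans_le (hcF f hf x)) (hM x)⟩)
  · intro δ hδ
    obtain ⟨T, hTF, hT_fin, hT_net⟩ := exists_finite_uniform_net hF_cpt (mul_pos hδ hc)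
    refine ⟨_, Set.image_mono hTF, hT_fin.image _, ?_⟩
    rintro _ ⟨f, hf, rfl⟩
    obtain ⟨g, hg, hfg⟩ := hT_net f hf
    exact ⟨_, Set.mem_image_of_mem _ hg, fun x =>
      (Real.abs_log_sub_log_le hc (hcF f hf x) (hcF g (hTF hg) x)).trans
        ((div_le_iff₀ hc).2 (hfg x))⟩
end

section
/- Let Ω be a non-empty bounded open interval in ℝ, Θ a non-empty compact subset of ℝ^m, (V,𝒱,μ) a probability space, and ρ : V × Θ → Ω measurable in its first argument and, for every v ∈ V, continuous in its second argument. Let (V_i)_{i∈ℕ} be i.i.d. V-valued random variables with law μ. Let 𝓕 be a non-empty set of non-negative bounded continuous real-valued functions on Ω that is compact with respect to the sup-norm metric and whose elements are uniformly bounded away from 0, i.e., inf_{f∈𝓕} inf_{x∈Ω} f(x) > 0. Then sup_{θ∈Θ} sup_{f∈𝓕} | k^{−1} ∑_{i=1}^k log f(ρ(V_i,θ)) − ∫_V log f(ρ(v,θ)) dμ(v) | → 0 almost surely as k → ∞. -/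
open MeasureTheory
open ProbabilityTheory (iIndepFun IdentDistrib strong_law_ae)
open scoped BoundedContinuousFunction

/-- A map into a second countable metric space is Borel measurable as soon as preimages of closed
balls are measurable. -/
theorem measurable_of_closedBall_preimage {V E : Type*} [MeasurableSpace V]
    [PseudoMetricSpace E] [SecondCountableTopology E] [MeasurableSpace E] [BorelSpace E]
    {φ : V → E} (h : ∀ x r, MeasurableSet (φ ⁻¹' Metric.closedBall x r)) : Measurable φ := by
  refine measurable_of_isOpen fun U hU => ?_
  have hball : ∀ x : E, ∃ r : ℝ, 0 < r ∧ (x ∈ U → Metric.closedBall x r ⊆ U) := by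
    intro x
    by_cases hx : x ∈ U
    · obtain ⟨r, hr, hsub⟩ := Metric.nhds_basis_closedBall.mem_iff.1 (hU.mem_nhds hx)
      exact ⟨r, hr, fun _ => hsub⟩
    · exact ⟨1, one_pos, fun h => absurd h hx⟩
  choose r hr hsub using hball
  obtain ⟨t, htU, htc, hcov⟩ := TopologicalSpace.countable_cover_nhdsWithin (s := U)
    (f := fun x => Metric.closedBall x (r x))
    fun x _ => mem_nhdsWithin_of_mem_nhds (Metric.closedBall_mem_nhds x (hr x))
  have hU_eq : U = ⋃ x ∈ t, Metric.closedBall x (r x) :=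
    hcov.antisymm (Set.iUnion₂_subset fun x hx => hsub x (htU hx))
  rw [hU_eq, Set.preimage_iUnion₂]
  exact MeasurableSet.biUnion htc fun x _ => h x (r x)

/-- A random continuous function on a compact second countable space is Borel measurable as soon
as all its evaluations are measurable. -/
theorem ContinuousMap.measurable_of_eval {V K : Type*} [MeasurableSpace V]
    [TopologicalSpace K] [CompactSpace K] [T2Space K] [SecondCountableTopology K]
    [MeasurableSpace C(K, ℝ)] [BorelSpace C(K, ℝ)]
    {φ : V → C(K, ℝ)} (h : ∀ x, Measurable fun v => φ v x) : Measurable φ := by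
  refine measurable_of_closedBall_preimage fun g r => ?_
  rcases lt_or_ge r 0 with hr | hr
  · simp [Metric.closedBall_eq_empty.2 hr]
  obtain ⟨s, hsc, hsd⟩ := TopologicalSpace.exists_countable_dense K
  have hset : φ ⁻¹' Metric.closedBall g r = ⋂ x ∈ s, {v | dist (φ v x) (g x) ≤ r} := by
    ext v
    simp only [Set.mem_preimage, Metric.mem_closedBall, ContinuousMap.dist_le hr, Set.mem_iInter,
      Set.mem_ofPred_eq]
    refine ⟨fun hv x _ => hv x, fun hv x => ?_⟩
    have hclosed : IsClosed {x | dist (φ v x) (g x) ≤ r} :=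
      isClosed_le (by fun_prop) continuous_const
    exact hclosed.closure_subset_iff.2 hv (hsd x)
  rw [hset]
  exact MeasurableSet.biInter hsc fun x _ =>
    measurableSet_le ((h x).dist measurable_const) measurable_const

/-- Uniform strong law of large numbers for a bounded random continuous function on a compact
second countable space. -/
theorem uniform_strong_law_ae {V K Ω₀ : Type*} [MeasurableSpace V] [MeasurableSpace Ω₀]
    [TopologicalSpace K] [CompactSpace K] [T2Space K] [SecondCountableTopology K]
    {μ : Measure V} {ℙ : Measure Ω₀} [IsProbabilityMeasure ℙ]
    {X : ℕ → Ω₀ → V} (hX : ∀ i, Measurable (X i)) (hlaw : ∀ i, Measure.map (X i) ℙ = μ)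
    (hindep : iIndepFun X ℙ) {φ : V → C(K, ℝ)} (hφ : ∀ x, Measurable fun v => φ v x)
    {C : ℝ} (hC : ∀ v, ‖φ v‖ ≤ C) :
    ∀ᵐ ω ∂ℙ, ∀ ε : ℝ, 0 < ε → ∃ N : ℕ, ∀ k ≥ N, ∀ x : K,
      |(k : ℝ)⁻¹ * ∑ i ∈ Finset.range k, φ (X i ω) x - ∫ v, φ v x ∂μ| ≤ ε := by
  borelize C(K, ℝ)
  have hφm : Measurable φ := ContinuousMap.measurable_of_eval hφ
  have hint : Integrable (fun ω => φ (X 0 ω)) ℙ :=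
    Integrable.of_bound (hφm.comp (hX 0)).aestronglyMeasurable C (ae_of_all _ fun ω => hC _)
  have hslln := strong_law_ae (fun i ω => φ (X i ω)) hint
    (fun i j hij => (hindep.indepFun hij).comp hφm hφm)
    (fun i => IdentDistrib.comp ⟨(hX i).aemeasurable, (hX 0).aemeasurable,
      (hlaw i).trans (hlaw 0).symm⟩ hφm)
  filter_upwards [hslln] with ω hω ε hε
  obtain ⟨N, hN⟩ := Metric.tendsto_atTop.1 hω ε hε
  refine ⟨N, fun k hk x => ?_⟩
  have hmean : (∫ ω, φ (X 0 ω) ∂ℙ) x = ∫ v, φ v x ∂μ := by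
    have hcomm := (ContinuousMap.evalCLM ℝ x).integral_comp_comm hint
    simp only [ContinuousMap.evalCLM_apply] at hcomm
    rw [← hcomm, ← hlaw 0, integral_map (hX 0).aemeasurable (hφ x).aestronglyMeasurable]
  have hdist := (ContinuousMap.dist_apply_le_dist x).trans (hN k hk).le
  rw [hmean, Real.dist_eq] at hdist
  simpa using hdist

/-- uniform-in-`(θ,f)` strong law of large numbers for the simulated
log-likelihood.  Let `Ω = (a,b)` be a non-empty bounded open interval, `Θ ⊆ ℝ^m` non-empty
compact, `(V,𝒱,μ)` a probability space, `ρ : V × Θ → Ω` measurable in its first and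
continuous in its second argument, and `(V_i)` i.i.d. with law `μ`.  Let `F` be a non-empty
set of non-negative bounded continuous real-valued functions on `Ω`, compact for the
sup-norm metric (topology of uniform convergence) and uniformly bounded away from `0`.
Then `sup_{θ∈Θ} sup_{f∈F} |k⁻¹ ∑_{i=1}^k log f(ρ(V_i,θ)) − ∫_V log f(ρ(v,θ)) dμ(v)| → 0`
almost surely as `k → ∞`. -/
theorem stmt7_uniform_slln_simulated
    {m : ℕ} (a b : ℝ) (hab : a < b)
    (Θ : Set (EuclideanSpace ℝ (Fin m))) (hΘc : IsCompact Θ) (hΘne : Θ.Nonempty)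
    {V : Type*} [MeasurableSpace V] (μ : Measure V) [IsProbabilityMeasure μ]
    (ρ : V → Θ → Set.Ioo a b)
    (hρ_meas : ∀ θ : Θ, Measurable fun v => ρ v θ)
    (hρ_cont : ∀ v, Continuous (ρ v))
    {Ω₀ : Type*} [MeasurableSpace Ω₀] (ℙ : Measure Ω₀) [IsProbabilityMeasure ℙ]
    (Vseq : ℕ → Ω₀ → V)
    (hV_meas : ∀ i, Measurable (Vseq i))
    (hV_law : ∀ i, Measure.map (Vseq i) ℙ = μ)
    (hV_indep : ProbabilityTheory.iIndepFun Vseq ℙ)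
    (F : Set (Set.Ioo a b → ℝ)) (hFne : F.Nonempty)
    (hF_cont : ∀ f ∈ F, Continuous f)
    (hF_nonneg : ∀ f ∈ F, ∀ x, 0 ≤ f x)
    (hF_bdd : ∀ f ∈ F, ∃ M : ℝ, ∀ x, f x ≤ M)
    (hF_cpt : IsCompact (UniformFun.ofFun '' F : Set (UniformFun (Set.Ioo a b) ℝ)))
    (hF_lb : ∃ c : ℝ, 0 < c ∧ ∀ f ∈ F, ∀ x, c ≤ f x) :
    ∀ᵐ ω ∂ℙ, ∀ ε : ℝ, 0 < ε → ∃ N : ℕ, ∀ k ≥ N, ∀ θ : Θ, ∀ f ∈ F,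
      |(k : ℝ)⁻¹ * ∑ i ∈ Finset.range k, Real.log (f (ρ (Vseq i ω) θ)) -
        ∫ v, Real.log (f (ρ v θ)) ∂μ| ≤ ε := by
  obtain ⟨c, hc, hcF⟩ := hF_lb
  let G : Set (Set.Ioo a b →ᵇ ℝ) := {g | ⇑g ∈ F}
  have hlift : ∀ f ∈ F, ∃ g ∈ G, ⇑g = f := by
    intro f hf
    obtain ⟨M, hM⟩ := hF_bdd f hf
    refine ⟨BoundedContinuousFunction.ofNormedAddCommGroup f (hF_cont f hf) M fun x => ?_, hf, rfl⟩
    rw [Real.norm_of_nonneg (hF_nonneg f hf x)]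
    exact hM x
  have himage : (UniformFun.ofFun ∘ (⇑) : (Set.Ioo a b →ᵇ ℝ) → _) '' G = UniformFun.ofFun '' F := by
    rw [Set.image_comp]
    congr 1
    ext f
    exact ⟨by rintro ⟨g, hg, rfl⟩; exact hg, hlift f⟩
  have hG : IsCompact G := by
    rw [BoundedContinuousFunction.isInducing_coeFn.isCompact_iff, himage]
    exact hF_cpt
  have : CompactSpace Θ := isCompact_iff_compactSpace.1 hΘc
  have : CompactSpace G := isCompact_iff_compactSpace.1 hG
  obtain ⟨M, hM⟩ := hG.isBounded.exists_norm_le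
  let φ : V → C(Θ × G, ℝ) := fun v =>
    { toFun := fun p => Real.log ((p.2 : Set.Ioo a b →ᵇ ℝ) (ρ v p.1))
      continuous_toFun := by
        have := hρ_cont v
        refine Continuous.log (by fun_prop) fun p => ?_
        exact (hc.trans_le (hcF _ p.2.2 _)).ne' }
  have hφ_bound : ∀ v, ‖φ v‖ ≤ max |Real.log c| |Real.log M| := by
    intro v
    refine (ContinuousMap.norm_le _ (by positivity)).2 fun p => ?_
    have hlow : c ≤ (p.2 : Set.Ioo a b →ᵇ ℝ) (ρ v p.1) := hcF _ p.2.2 _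
    have hupp : (p.2 : Set.Ioo a b →ᵇ ℝ) (ρ v p.1) ≤ M :=
      (le_abs_self _).trans ((BoundedContinuousFunction.norm_coe_le_norm _ _).trans (hM _ p.2.2))
    exact abs_le_max_abs_abs (Real.log_le_log hc hlow) (Real.log_le_log (hc.trans_le hlow) hupp)
  have hφ_meas : ∀ p, Measurable fun v => φ v p := fun p =>
    Real.measurable_log.comp
      ((p.2 : Set.Ioo a b →ᵇ ℝ).continuous.measurable.comp (hρ_meas p.1))
  filter_upwards [uniform_strong_law_ae hV_meas hV_law hV_indep hφ_meas hφ_bound] with ω hω ε hε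
  obtain ⟨N, hN⟩ := hω ε hε
  refine ⟨N, fun k hk θ f hf => ?_⟩
  obtain ⟨g, hg, rfl⟩ := hlift f hf
  exact hN k hk (θ, ⟨g, hg⟩)
end
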